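/- arXiv:1411.6415 — 3 statements merged into one kernel-verified Lean document; each statement's English description precedes it below -/
import Mathlib

section
/- Let $l \ge 2$ be an integer and $k \ge 1$. Let $\Lambda_1 \le \Lambda_2 \le \cdots \le \Lambda_k \le \Lambda_{k+1}$ be positive real numbers. Then $\left(\sum_{i=1}^k(\Lambda_{k+1}-\Lambda_i)^2 \Lambda_i^{(l-2)/(l-1)}\right)\left(\sum_{i=1}^k(\Lambda_{k+1}-\Lambda_i) \Lambda_i^{1/(l-1)}\right) \le \left(\sum_{i=1}^k(\Lambda_{k+1}-\Lambda_i)^2\right)\left(\sum_{i=1}^k(\Lambda_{k+1}-\Lambda_i)\Lambda_i\right)$, where powers with real exponents are real powers of positive reals. -/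
/-!
Write `d i = Λ (k+1) - Λ i`, `a i = Λ i ^ ((l-2)/(l-1))`, `b i = Λ i ^ (1/(l-1))`, so that
`a i * b i = Λ i`. The right side minus the left side is the double sum of
`d i ^ 2 * d j * b j * (a j - a i)`. Averaging it with its transpose gives half the double sum of
`d i * d j * (a j - a i) * (d i * b j - d j * b i)`. Every term is nonnegative, because `a` and `b`
increase with `Λ i` while `d` decreases.
-/


open Finset

/-- A weighted Chebyshev inequality: the hypothesis `h` is nonnegativity of the `(i, j)` term of
the symmetrized double sum. -/
lemma sum_mul_sum_le_of_pairwise {ι : Type*} (s : Finset ι) (d a b : ι → ℝ)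
    (h : ∀ i ∈ s, ∀ j ∈ s, 0 ≤ d i * d j * ((a j - a i) * (d i * b j - d j * b i))) :
    (∑ i ∈ s, d i ^ 2 * a i) * (∑ i ∈ s, d i * b i) ≤
      (∑ i ∈ s, d i ^ 2) * (∑ i ∈ s, d i * (a i * b i)) := by
  have key : 0 ≤ ∑ i ∈ s, ∑ j ∈ s, d i * d j * ((a j - a i) * (d i * b j - d j * b i)) :=
    Finset.sum_nonneg fun i hi => Finset.sum_nonneg fun j hj => h i hi j hj
  have split : ∑ i ∈ s, ∑ j ∈ s, d i * d j * ((a j - a i) * (d i * b j - d j * b i)) =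
      (∑ i ∈ s, ∑ j ∈ s, (d i ^ 2 * (d j * (a j * b j)) - d i ^ 2 * a i * (d j * b j))) +
      ∑ i ∈ s, ∑ j ∈ s, (d j ^ 2 * (d i * (a i * b i)) - d j ^ 2 * a j * (d i * b i)) := by
    simp only [← Finset.sum_add_distrib]
    exact Finset.sum_congr rfl fun i _ => Finset.sum_congr rfl fun j _ => by ring
  rw [split, Finset.sum_comm (f := fun i j =>
    d j ^ 2 * (d i * (a i * b i)) - d j ^ 2 * a j * (d i * b i))] at key
  rw [Finset.sum_mul_sum, Finset.sum_mul_sum]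
  simp only [Finset.sum_sub_distrib] at key
  linarith

/-- Chebyshev-type sum inequality (1.8): for an integer `l ≥ 2` and a nondecreasing
finite sequence of positive reals `Λ 1 ≤ ⋯ ≤ Λ (k+1)`,
`(∑ (Λ_{k+1}-Λ_i)^2 Λ_i^{(l-2)/(l-1)}) (∑ (Λ_{k+1}-Λ_i) Λ_i^{1/(l-1)})
  ≤ (∑ (Λ_{k+1}-Λ_i)^2) (∑ (Λ_{k+1}-Λ_i) Λ_i)`. -/
theorem chebyshev_type_inequality
    (l : ℕ) (hl : 2 ≤ l) (k : ℕ) (hk : 1 ≤ k)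
    (Λ : ℕ → ℝ)
    (hpos : ∀ i ∈ Finset.Icc 1 (k + 1), 0 < Λ i)
    (hmono : ∀ i ∈ Finset.Icc 1 (k + 1), ∀ j ∈ Finset.Icc 1 (k + 1),
      i ≤ j → Λ i ≤ Λ j) :
    (∑ i ∈ Finset.Icc 1 k,
        (Λ (k + 1) - Λ i) ^ 2 * Λ i ^ (((l : ℝ) - 2) / ((l : ℝ) - 1))) *
      (∑ i ∈ Finset.Icc 1 k,
        (Λ (k + 1) - Λ i) * Λ i ^ (1 / ((l : ℝ) - 1))) ≤
    (∑ i ∈ Finset.Icc 1 k, (Λ (k + 1) - Λ i) ^ 2) *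
      (∑ i ∈ Finset.Icc 1 k, (Λ (k + 1) - Λ i) * Λ i) := by
  have hl' : (2 : ℝ) ≤ l := by exact_mod_cast hl
  have hp : 0 ≤ ((l : ℝ) - 2) / ((l : ℝ) - 1) := div_nonneg (by linarith) (by linarith)
  have hq : 0 ≤ 1 / ((l : ℝ) - 1) := div_nonneg zero_le_one (by linarith)
  have hpq : ((l : ℝ) - 2) / ((l : ℝ) - 1) + 1 / ((l : ℝ) - 1) = 1 := by
    have : (l : ℝ) - 1 ≠ 0 := by linarith
    field_simp
    ring
  have hmem : ∀ i ∈ Finset.Icc 1 k, i ∈ Finset.Icc 1 (k + 1) := fun i hi =>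
    Finset.Icc_subset_Icc_right (Nat.le_succ k) hi
  have hd : ∀ i ∈ Finset.Icc 1 k, 0 ≤ Λ (k + 1) - Λ i := fun i hi =>
    sub_nonneg.2 (hmono i (hmem i hi) (k + 1) (by simp)
      (Finset.mem_Icc.1 (hmem i hi)).2)
  have hprod : ∑ i ∈ Finset.Icc 1 k, (Λ (k + 1) - Λ i) * Λ i =
      ∑ i ∈ Finset.Icc 1 k, (Λ (k + 1) - Λ i) *
        (Λ i ^ (((l : ℝ) - 2) / ((l : ℝ) - 1)) * Λ i ^ (1 / ((l : ℝ) - 1))) :=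
    Finset.sum_congr rfl fun i hi => by
      rw [← Real.rpow_add (hpos i (hmem i hi)), hpq, Real.rpow_one]
  rw [hprod]
  refine sum_mul_sum_le_of_pairwise _ (fun i => Λ (k + 1) - Λ i) _ _ fun i hi j hj => ?_
  refine mul_nonneg (mul_nonneg (hd i hi) (hd j hj)) ?_
  have hi0 := (hpos i (hmem i hi)).le
  have hj0 := (hpos j (hmem j hj)).le
  rcases le_total (Λ i) (Λ j) with hij | hij
  · refine mul_nonneg (sub_nonneg.2 (Real.rpow_le_rpow hi0 hij hp)) (sub_nonneg.2 ?_)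
    exact mul_le_mul (by linarith) (Real.rpow_le_rpow hi0 hij hq)
      (Real.rpow_nonneg hi0 _) (hd i hi)
  · refine mul_nonneg_of_nonpos_of_nonpos
      (sub_nonpos.2 (Real.rpow_le_rpow hj0 hij hp)) (sub_nonpos.2 ?_)
    exact mul_le_mul (by linarith) (Real.rpow_le_rpow hj0 hij hq)
      (Real.rpow_nonneg hj0 _) (hd j hj)
end

section
/- Let $l \ge 2$ be an integer, $k \ge 1$, and let $\Lambda_1 \le \Lambda_2 \le \cdots \le \Lambda_k \le \Lambda_{k+1}$ be positive real numbers. Set $C = 2l^2 - \tfrac{11}{3} l + \tfrac{5}{3}$. Suppose that for every real $\delta > 0$ one has $\sum_{i=1}^k(\Lambda_{k+1}-\Lambda_i)^2 \le C\,\delta \sum_{i=1}^k (\Lambda_{k+1}-\Lambda_i)^2 \Lambda_i^{(l-2)/(l-1)} + \tfrac{1}{\delta}\sum_{i=1}^k(\Lambda_{k+1}-\Lambda_i)\Lambda_i^{1/(l-1)}$. Then $\sum_{i=1}^k(\Lambda_{k+1}-\Lambda_i)^2 \le 4C \sum_{i=1}^k(\Lambda_{k+1}-\Lambda_i)\Lambda_i$.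 -/
/-!
Write `a i = Λ (k+1) - Λ i ≥ 0`, `p i = Λ i ^ ((l-2)/(l-1))` and `q i = Λ i ^ (1/(l-1))`, so that
`p i * q i = Λ i`. With `S = ∑ a²`, `A = ∑ a² p`, `B = ∑ a q` and `T = ∑ a Λ`, the hypothesis says
that the quadratic `C A δ² - S δ + B` is nonnegative for all `δ > 0`; its value at the vertex
`δ = S / (2 C A)` gives the discriminant bound `S² ≤ 4 C A B`. Since `p` and `q` increase
with `Λ` while `a` decreases, the Chebyshev-type inequality `A B ≤ S T`
(`weighted_chebyshev`) applies, and dividing `S² ≤ 4 C S T` by `S` finishes the proof.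
The division is legitimate unless `S = 0`, where the claim is only `0 ≤ 4 C T`.
-/

open Finset

/-- Chebyshev-type inequality: symmetrizing the double sum for the difference of the two sides
gives the summands `a i * a j * (p j - p i) * (a i * q j - a j * q i)`, which are nonnegative
when `a` is ordered oppositely to `p` and `q`. -/
lemma weighted_chebyshev (s : Finset ℕ) (a p q : ℕ → ℝ)
    (ha : ∀ i ∈ s, 0 ≤ a i) (hq : ∀ i ∈ s, 0 ≤ q i)
    (h : ∀ i ∈ s, ∀ j ∈ s, i ≤ j → a j ≤ a i ∧ p i ≤ p j ∧ q i ≤ q j) :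
    (∑ i ∈ s, a i ^ 2 * p i) * (∑ i ∈ s, a i * q i) ≤
      (∑ i ∈ s, a i ^ 2) * (∑ i ∈ s, a i * (p i * q i)) := by
  have key : ∀ i ∈ s, ∀ j ∈ s, i ≤ j →
      0 ≤ a i * a j * ((p j - p i) * (a i * q j - a j * q i)) := by
    intro i hi j hj hij
    obtain ⟨h1, h2, h3⟩ := h i hi j hj hij
    have h4 : a j * q i ≤ a i * q j := mul_le_mul h1 h3 (hq i hi) (ha i hi)
    exact mul_nonneg (mul_nonneg (ha i hi) (ha j hj))
      (mul_nonneg (sub_nonneg.2 h2) (sub_nonneg.2 h4))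
  have hsum : 0 ≤ ∑ i ∈ s, ∑ j ∈ s,
      a i * a j * ((p j - p i) * (a i * q j - a j * q i)) := by
    refine Finset.sum_nonneg fun i hi => Finset.sum_nonneg fun j hj => ?_
    rcases le_total i j with hij | hij
    · exact key i hi j hj hij
    · have := key j hj i hi hij
      linarith
  have hD : (∑ i ∈ s, a i ^ 2) * (∑ i ∈ s, a i * (p i * q i)) -
      (∑ i ∈ s, a i ^ 2 * p i) * (∑ i ∈ s, a i * q i) =
      ∑ i ∈ s, ∑ j ∈ s, a i ^ 2 * a j * q j * (p j - p i) := by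
    rw [Finset.sum_mul_sum, Finset.sum_mul_sum, ← Finset.sum_sub_distrib]
    refine Finset.sum_congr rfl fun i _ => ?_
    rw [← Finset.sum_sub_distrib]
    exact Finset.sum_congr rfl fun j _ => by ring
  have hswap : ∑ i ∈ s, ∑ j ∈ s, a i ^ 2 * a j * q j * (p j - p i) =
      ∑ i ∈ s, ∑ j ∈ s, a j ^ 2 * a i * q i * (p i - p j) := Finset.sum_comm
  have hadd : ∑ i ∈ s, ∑ j ∈ s, a i * a j * ((p j - p i) * (a i * q j - a j * q i)) =
      ∑ i ∈ s, ∑ j ∈ s, a i ^ 2 * a j * q j * (p j - p i) +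
      ∑ i ∈ s, ∑ j ∈ s, a j ^ 2 * a i * q i * (p i - p j) := by
    rw [← Finset.sum_add_distrib]
    refine Finset.sum_congr rfl fun i _ => ?_
    rw [← Finset.sum_add_distrib]
    exact Finset.sum_congr rfl fun j _ => by ring
  linarith

/-- Deduction of Corollary 1.2 from Theorem 1.1: if for every `δ > 0`,
`∑ (Λ_{k+1}-Λ_i)^2 ≤ C δ ∑ (Λ_{k+1}-Λ_i)^2 Λ_i^{(l-2)/(l-1)}
  + (1/δ) ∑ (Λ_{k+1}-Λ_i) Λ_i^{1/(l-1)}` with `C = 2l² - (11/3)l + 5/3`,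
then `∑ (Λ_{k+1}-Λ_i)^2 ≤ 4C ∑ (Λ_{k+1}-Λ_i) Λ_i`. -/
theorem buckling_corollary
    (l : ℕ) (hl : 2 ≤ l) (k : ℕ) (hk : 1 ≤ k)
    (Λ : ℕ → ℝ)
    (hpos : ∀ i ∈ Finset.Icc 1 (k + 1), 0 < Λ i)
    (hmono : ∀ i ∈ Finset.Icc 1 (k + 1), ∀ j ∈ Finset.Icc 1 (k + 1),
      i ≤ j → Λ i ≤ Λ j)
    (C : ℝ) (hC : C = 2 * (l : ℝ) ^ 2 - 11 / 3 * (l : ℝ) + 5 / 3)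
    (hyp : ∀ δ : ℝ, 0 < δ →
      ∑ i ∈ Finset.Icc 1 k, (Λ (k + 1) - Λ i) ^ 2 ≤
        C * δ * ∑ i ∈ Finset.Icc 1 k,
            (Λ (k + 1) - Λ i) ^ 2 * Λ i ^ (((l : ℝ) - 2) / ((l : ℝ) - 1)) +
          (1 / δ) * ∑ i ∈ Finset.Icc 1 k,
            (Λ (k + 1) - Λ i) * Λ i ^ (1 / ((l : ℝ) - 1))) :
    ∑ i ∈ Finset.Icc 1 k, (Λ (k + 1) - Λ i) ^ 2 ≤
      4 * C * ∑ i ∈ Finset.Icc 1 k, (Λ (k + 1) - Λ i) * Λ i := by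
  have hl' : (2 : ℝ) ≤ l := by exact_mod_cast hl
  have hl1 : (0 : ℝ) < (l : ℝ) - 1 := by linarith
  have hCpos : 0 < C := by rw [hC]; nlinarith
  have hs : 0 ≤ ((l : ℝ) - 2) / ((l : ℝ) - 1) := div_nonneg (by linarith) hl1.le
  have ht : 0 ≤ 1 / ((l : ℝ) - 1) := by positivity
  have hst : ((l : ℝ) - 2) / ((l : ℝ) - 1) + 1 / ((l : ℝ) - 1) = 1 := by
    field_simp
    ring
  have hmem : ∀ i ∈ Finset.Icc 1 k, i ∈ Finset.Icc 1 (k + 1) := by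
    intro i hi
    simp only [Finset.mem_Icc] at hi ⊢
    omega
  have hlast : k + 1 ∈ Finset.Icc 1 (k + 1) := by simp
  have ha : ∀ i ∈ Finset.Icc 1 k, 0 ≤ Λ (k + 1) - Λ i := fun i hi =>
    sub_nonneg.2 (hmono i (hmem i hi) _ hlast (Finset.mem_Icc.1 (hmem i hi)).2)
  have hΛ : ∀ i ∈ Finset.Icc 1 k, 0 < Λ i := fun i hi => hpos i (hmem i hi)
  have hcheb := weighted_chebyshev (Finset.Icc 1 k) (fun i => Λ (k + 1) - Λ i)
    (fun i => Λ i ^ (((l : ℝ) - 2) / ((l : ℝ) - 1))) (fun i => Λ i ^ (1 / ((l : ℝ) - 1)))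
    ha (fun i hi => Real.rpow_nonneg (hΛ i hi).le _) (by
      intro i hi j hj hij
      have h := hmono i (hmem i hi) j (hmem j hj) hij
      exact ⟨by linarith, Real.rpow_le_rpow (hΛ i hi).le h hs,
        Real.rpow_le_rpow (hΛ i hi).le h ht⟩)
  have hT : ∑ i ∈ Finset.Icc 1 k, (Λ (k + 1) - Λ i) *
      (Λ i ^ (((l : ℝ) - 2) / ((l : ℝ) - 1)) * Λ i ^ (1 / ((l : ℝ) - 1))) =
      ∑ i ∈ Finset.Icc 1 k, (Λ (k + 1) - Λ i) * Λ i := by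
    refine Finset.sum_congr rfl fun i hi => ?_
    rw [← Real.rpow_add (hΛ i hi), hst, Real.rpow_one]
  simp only [hT] at hcheb
  have hT0 : 0 ≤ ∑ i ∈ Finset.Icc 1 k, (Λ (k + 1) - Λ i) * Λ i :=
    Finset.sum_nonneg fun i hi => mul_nonneg (ha i hi) (hΛ i hi).le
  have hS0 : 0 ≤ ∑ i ∈ Finset.Icc 1 k, (Λ (k + 1) - Λ i) ^ 2 :=
    Finset.sum_nonneg fun i _ => sq_nonneg _
  rcases hS0.eq_or_lt with hS | hS
  · rw [← hS]
    positivity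
  have hA : 0 < ∑ i ∈ Finset.Icc 1 k,
      (Λ (k + 1) - Λ i) ^ 2 * Λ i ^ (((l : ℝ) - 2) / ((l : ℝ) - 1)) := by
    obtain ⟨i, hi, hne⟩ := Finset.exists_ne_zero_of_sum_ne_zero hS.ne'
    refine Finset.sum_pos' (fun j hj => mul_nonneg (sq_nonneg _)
      (Real.rpow_nonneg (hΛ j hj).le _)) ⟨i, hi, ?_⟩
    exact mul_pos (lt_of_le_of_ne (sq_nonneg _) hne.symm) (Real.rpow_pos_of_pos (hΛ i hi) _)
  generalize ∑ i ∈ Finset.Icc 1 k, (Λ (k + 1) - Λ i) ^ 2 = S at *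
  generalize ∑ i ∈ Finset.Icc 1 k,
      (Λ (k + 1) - Λ i) ^ 2 * Λ i ^ (((l : ℝ) - 2) / ((l : ℝ) - 1)) = A at *
  generalize ∑ i ∈ Finset.Icc 1 k, (Λ (k + 1) - Λ i) * Λ i ^ (1 / ((l : ℝ) - 1)) = B at *
  generalize ∑ i ∈ Finset.Icc 1 k, (Λ (k + 1) - Λ i) * Λ i = T at *
  -- The vertex of the quadratic `C A δ² - S δ + B`.
  have h := hyp (S / (2 * C * A)) (by positivity)
  have e : C * (S / (2 * C * A)) * A + 1 / (S / (2 * C * A)) * B =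
      S / 2 + 2 * C * (A * B) / S := by
    field_simp
  rw [e] at h
  have h2 : 2 * C * (A * B) / S ≤ 2 * C * T := by
    rw [div_le_iff₀ hS]
    calc 2 * C * (A * B) ≤ 2 * C * (S * T) := by gcongr
      _ = 2 * C * T * S := by ring
  linarith
end

section
/- Let $k \ge 1$, let $\Lambda_1 \le \Lambda_2 \le \cdots \le \Lambda_k \le \Lambda_{k+1}$ be real numbers, let $\delta_1 \ge \delta_2 \ge \cdots \ge \delta_k > 0$ be a positive non-increasing sequence of reals, and let $b = (b_{ij})_{1 \le i,j \le k}$ be a symmetric real matrix (i.e., $b_{ij} = b_{ji}$ for all $i,j$). Then $\sum_{i,j=1}^k \delta_i (\Lambda_{k+1}-\Lambda_i)^2 (\Lambda_i-\Lambda_j) b_{ij}^2 \le -\sum_{i,j=1}^k \delta_i (\Lambda_{k+1}-\Lambda_i)(\Lambda_i-\Lambda_j)^2 b_{ij}^2$. -/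
open Finset

/-!
Write `x i = Λ (k + 1) - Λ i`, which is nonnegative. Since `Λ i - Λ j = x j - x i`, the two summands
add up to `F i j = δ i * x i * x j * (Λ i - Λ j) * (b i j) ^ 2`. By symmetry of `b`,
`F i j + F j i = x i * x j * ((δ i - δ j) * (Λ i - Λ j)) * (b i j) ^ 2`, which is nonpositive because
`δ` and `Λ` are oppositely ordered. Hence `2 * ∑ F ≤ 0` after exchanging the order of summation.
-/

/-- Inequality (2.19): for a nondecreasing sequence of reals `Λ 1 ≤ ⋯ ≤ Λ (k+1)`,
a positive non-increasing sequence `δ 1 ≥ ⋯ ≥ δ k > 0`, and a symmetric matrix `b`,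
`∑_{i,j} δ_i (Λ_{k+1}-Λ_i)² (Λ_i-Λ_j) b_{ij}²
  ≤ -∑_{i,j} δ_i (Λ_{k+1}-Λ_i)(Λ_i-Λ_j)² b_{ij}²`. -/
theorem symmetrization_inequality
    (k : ℕ) (hk : 1 ≤ k)
    (Λ : ℕ → ℝ)
    (hmono : ∀ i ∈ Finset.Icc 1 (k + 1), ∀ j ∈ Finset.Icc 1 (k + 1),
      i ≤ j → Λ i ≤ Λ j)
    (δ : ℕ → ℝ)
    (hδpos : ∀ i ∈ Finset.Icc 1 k, 0 < δ i)
    (hδmono : ∀ i ∈ Finset.Icc 1 k, ∀ j ∈ Finset.Icc 1 k, i ≤ j → δ j ≤ δ i)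
    (b : ℕ → ℕ → ℝ)
    (hsymm : ∀ i ∈ Finset.Icc 1 k, ∀ j ∈ Finset.Icc 1 k, b i j = b j i) :
    ∑ i ∈ Finset.Icc 1 k, ∑ j ∈ Finset.Icc 1 k,
        δ i * (Λ (k + 1) - Λ i) ^ 2 * (Λ i - Λ j) * (b i j) ^ 2 ≤
      -(∑ i ∈ Finset.Icc 1 k, ∑ j ∈ Finset.Icc 1 k,
          δ i * (Λ (k + 1) - Λ i) * (Λ i - Λ j) ^ 2 * (b i j) ^ 2) := by
  set S := Finset.Icc 1 k with hS
  let F : ℕ → ℕ → ℝ := fun i j =>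
    δ i * (Λ (k + 1) - Λ i) * (Λ (k + 1) - Λ j) * (Λ i - Λ j) * (b i j) ^ 2
  have hx : ∀ i ∈ S, 0 ≤ Λ (k + 1) - Λ i := by
    intro i hi
    rw [hS, Finset.mem_Icc] at hi
    exact sub_nonneg.2 (hmono i (Finset.mem_Icc.2 ⟨hi.1, by omega⟩) (k + 1)
      (Finset.mem_Icc.2 ⟨by omega, le_rfl⟩) (by omega))
  have hsub : ∀ i ∈ S, i ∈ Finset.Icc 1 (k + 1) := fun i hi =>
    Finset.Icc_subset_Icc_right (Nat.le_succ k) hi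
  have hopp : ∀ i ∈ S, ∀ j ∈ S, (δ i - δ j) * (Λ i - Λ j) ≤ 0 := by
    intro i hi j hj
    rcases le_total i j with h | h
    · exact mul_nonpos_of_nonneg_of_nonpos (sub_nonneg.2 (hδmono i hi j hj h))
        (sub_nonpos.2 (hmono i (hsub i hi) j (hsub j hj) h))
    · exact mul_nonpos_of_nonpos_of_nonneg (sub_nonpos.2 (hδmono j hj i hi h))
        (sub_nonneg.2 (hmono j (hsub j hj) i (hsub i hi) h))
  have hpair : ∀ i ∈ S, ∀ j ∈ S, F i j + F j i ≤ 0 := by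
    intro i hi j hj
    have e : F i j + F j i = ((Λ (k + 1) - Λ i) * (Λ (k + 1) - Λ j) * (b i j) ^ 2) *
        ((δ i - δ j) * (Λ i - Λ j)) := by
      simp only [F, ← hsymm i hi j hj]
      ring
    rw [e]
    exact mul_nonpos_of_nonneg_of_nonpos
      (mul_nonneg (mul_nonneg (hx i hi) (hx j hj)) (sq_nonneg _)) (hopp i hi j hj)
  have hdouble : ∑ i ∈ S, ∑ j ∈ S, F i j + ∑ i ∈ S, ∑ j ∈ S, F i j ≤ 0 := by
    have hswap : ∑ i ∈ S, ∑ j ∈ S, F i j = ∑ i ∈ S, ∑ j ∈ S, F j i := Finset.sum_comm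
    nth_rewrite 2 [hswap]
    simp only [← Finset.sum_add_distrib]
    exact Finset.sum_nonpos fun i hi => Finset.sum_nonpos fun j hj => hpair i hi j hj
  have hsum : ∑ i ∈ S, ∑ j ∈ S, δ i * (Λ (k + 1) - Λ i) ^ 2 * (Λ i - Λ j) * (b i j) ^ 2 +
      ∑ i ∈ S, ∑ j ∈ S, δ i * (Λ (k + 1) - Λ i) * (Λ i - Λ j) ^ 2 * (b i j) ^ 2 =
      ∑ i ∈ S, ∑ j ∈ S, F i j := by
    simp only [← Finset.sum_add_distrib]
    refine Finset.sum_congr rfl fun i _ => Finset.sum_congr rfl fun j _ => ?_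
    simp only [F]
    ring
  linarith
end
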